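/- In the infinitesimal Hecke algebra H_{z'} = U(sl₂ ⋉ ℂ²)-deformation with relations [e,x]=0, [f,x]=y, [h,x]=x, [h,y]=-y, [e,y]=x, [f,y]=0, [x,y]=z'(Δ), the element t_z = ey² + ½h(xy+yx) - fx² + z(Δ) commutes with e, f, h, x, y (for the appropriate z ∈ ℂ[Δ] determined by z'), i.e. t_z is central. -/

import Mathlib

/-!
On the simple `sl₂`-module of highest weight `s - 1` the Casimir `Δ` acts by `s² - 1`, and
multiplication by a vector of the standard representation moves `s` to `s ± 1`. Accordingly, left
and right multiplication by `Δ` on the `ℂ[Δ]`-bimodule generated by `x` are the polynomials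
`(S + 1)² - 1` and `S² - 1` in the single operator `S = (ad Δ - 1) / 2`. Writing `t` for the part
of `t_z` without `z(Δ)`, the brackets `[t, x]` and `[z(Δ), x]` both become polynomials in `S`
applied to `x`, so that `[t_z, x] = 0` turns into a difference equation for `z`. Its right-hand
side is odd under `s ↦ -1 - s`, so it has a solution that is even in `s`, that is, a polynomial in
`s² - 1`.
-/

open Polynomial

namespace InfinitesimalHecke

section DifferenceEquation

variable {R : Type*} [CommRing R]

lemma exists_add_comp_neg_X_eq_comp_X_sq (P : R[X]) :
    ∃ Q : R[X], P + P.comp (-X) = Q.comp (X ^ 2) := by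
  induction P using Polynomial.induction_on' with
  | add p q hp hq =>
    obtain ⟨P, hP⟩ := hp
    obtain ⟨Q, hQ⟩ := hq
    exact ⟨P + Q, by rw [add_comp, add_comp, ← hP, ← hQ]; ring⟩
  | monomial n a =>
    rw [← C_mul_X_pow_eq_monomial]
    obtain ⟨k, rfl | rfl⟩ := Nat.even_or_odd' n
    · refine ⟨2 * (C a * X ^ k), ?_⟩
      simp only [mul_comp, C_comp, pow_comp, X_comp, ofNat_comp, pow_mul, neg_sq]
      ring
    · exact ⟨0, by simp [pow_succ, pow_mul]⟩

/-- The difference equation that makes `t_z` central when `z' = w`, written in the variable `s = X`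
for which the Casimir acts on the simple `sl₂`-module of dimension `s` by `s² - 1`. -/
def IsCentralCompanion (w z : R[X]) : Prop :=
  2 * (z.comp ((X + 1) ^ 2 - 1) - z.comp (X ^ 2 - 1))
    = X * w.comp ((X + 1) ^ 2 - 1) + (X + 1) * w.comp (X ^ 2 - 1)

variable [Algebra ℚ R]

lemma exists_comp_X_add_one_sub_eq (G : R[X]) : ∃ P : R[X], P.comp (X + 1) - P = G := by
  induction G using Polynomial.induction_on' with
  | add p q hp hq =>
    obtain ⟨P, hP⟩ := hp
    obtain ⟨Q, hQ⟩ := hq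
    exact ⟨P + Q, by rw [add_comp, ← hP, ← hQ]; ring⟩
  | monomial n a =>
    let B : ℚ[X] := C (n + 1 : ℚ)⁻¹ * Polynomial.bernoulli (n + 1)
    have hB : B.comp (X + 1) - B = X ^ n := by
      have hn : (C (n + 1 : ℚ)⁻¹ : ℚ[X]) * (n + 1) = 1 := by
        rw [← C_eq_natCast, ← C_1, ← C_add, ← C_mul, inv_mul_cancel₀ n.cast_add_one_ne_zero]
      simp only [B, mul_comp, C_comp, add_comm X, bernoulli_comp_one_add_X, nsmul_eq_mul,
        Nat.cast_succ, Nat.add_sub_cancel]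
      linear_combination X ^ n * hn
    refine ⟨C a * B.map (algebraMap ℚ R), ?_⟩
    calc (C a * B.map (algebraMap ℚ R)).comp (X + 1) - C a * B.map (algebraMap ℚ R)
        = C a * (B.comp (X + 1) - B).map (algebraMap ℚ R) := by
          simp [Polynomial.map_comp, mul_sub]
      _ = monomial n a := by simp [hB, C_mul_X_pow_eq_monomial]

variable (R) in
lemma two_mul_algebraMap_two_inv : 2 * algebraMap ℚ R 2⁻¹ = 1 := by
  rw [← map_ofNat (algebraMap ℚ R) 2, ← map_mul, mul_inv_cancel₀ two_ne_zero, map_one]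

variable (R) in
lemma two_mul_C_algebraMap_two_inv : (2 : R[X]) * C (algebraMap ℚ R 2⁻¹) = 1 := by
  rw [← C_ofNat, ← C_mul, two_mul_algebraMap_two_inv, C_1]

lemma exists_comp_X_add_one_sq_sub_eq {G : R[X]} (hG : G.comp (-X - 1) = -G) :
    ∃ Q : R[X], Q.comp ((X + 1) ^ 2) - Q.comp (X ^ 2) = G := by
  obtain ⟨P, hP⟩ := exists_comp_X_add_one_sub_eq G
  obtain ⟨Q, hQ⟩ := exists_add_comp_neg_X_eq_comp_X_sq P
  have hP_neg : P.comp (-X) - P.comp (-X - 1) = -G := by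
    have := congr_arg (comp · (-X - 1)) hP
    simpa only [sub_comp, comp_assoc, add_comp, X_comp, one_comp, sub_add_cancel, hG] using this
  have hQ_succ : P.comp (X + 1) + P.comp (-X - 1) = Q.comp ((X + 1) ^ 2) := by
    have := congr_arg (comp · (X + 1)) hQ
    simpa only [add_comp, comp_assoc, neg_comp, pow_comp, X_comp, neg_add'] using this
  refine ⟨C (algebraMap ℚ R 2⁻¹) * Q, ?_⟩
  rw [mul_comp, mul_comp, C_comp, C_comp, ← hQ, ← hQ_succ]
  linear_combination C (algebraMap ℚ R 2⁻¹) * (hP - hP_neg)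
    + G * two_mul_C_algebraMap_two_inv R

lemma exists_isCentralCompanion (w : R[X]) : ∃ z : R[X], IsCentralCompanion w z := by
  have reflect_succ : (-X - 1 + 1 : R[X]) ^ 2 - 1 = X ^ 2 - 1 := by ring
  have reflect : (-X - 1 : R[X]) ^ 2 - 1 = (X + 1) ^ 2 - 1 := by ring
  have odd : (X * w.comp ((X + 1) ^ 2 - 1) + (X + 1) * w.comp (X ^ 2 - 1)).comp (-X - 1)
      = -(X * w.comp ((X + 1) ^ 2 - 1) + (X + 1) * w.comp (X ^ 2 - 1)) := by
    simp only [add_comp, mul_comp, X_comp, comp_assoc, sub_comp, pow_comp, one_comp,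
      reflect_succ, reflect]
    ring
  obtain ⟨Q, hQ⟩ := exists_comp_X_add_one_sq_sub_eq odd
  refine ⟨C (algebraMap ℚ R 2⁻¹) * Q.comp (X + 1), ?_⟩
  simp only [IsCentralCompanion, mul_comp, C_comp, comp_assoc, add_comp, X_comp, one_comp,
    sub_add_cancel]
  rw [← mul_sub, ← mul_assoc, two_mul_C_algebraMap_two_inv, one_mul, hQ]

end DifferenceEquation

section PolynomialAction

variable {R A M : Type*} [CommSemiring R] [Semiring A] [Algebra R A] [AddCommMonoid M] [Module R M]

lemma commute_aeval_right {a b : A} (h : Commute a b) (p : R[X]) : Commute a (aeval b p) :=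
  Algebra.commute_of_mem_adjoin_singleton_of_commute (aeval_mem_adjoin_singleton R b) h

lemma aeval_mulLeft (a : A) (p : R[X]) :
    aeval (LinearMap.mulLeft R a) p = LinearMap.mulLeft R (aeval a p) :=
  aeval_algHom_apply (Algebra.lmul R A) a p

lemma aeval_mulRight (a : A) (p : R[X]) :
    aeval (LinearMap.mulRight R a) p = LinearMap.mulRight R (aeval a p) := by
  ext b
  simp [aeval_eq_sum_range, LinearMap.pow_mulRight, Finset.mul_sum]

lemma aeval_apply_eq_aeval_comp_apply {F S : Module.End R M} (hFS : Commute F S) {p : R[X]} {v : M}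
    (hv : F v = aeval S p v) (w : R[X]) : aeval F w v = aeval S (w.comp p) v := by
  induction w using Polynomial.induction_on with
  | C a => simp
  | add u v hu hv => simp [hu, hv]
  | monomial n a ih =>
    have hcomm : Commute (aeval F (C a * X ^ n)) (aeval S p) :=
      commute_aeval_right (commute_aeval_right hFS.symm _).symm p
    rw [pow_succ, ← mul_assoc, mul_X_comp, mul_comm (comp _ _), map_mul _ p, Module.End.mul_apply,
      ← ih, map_mul _ _ X, aeval_X, Module.End.mul_apply, hv]
    exact LinearMap.congr_fun hcomm.eq v

end PolynomialAction

section Shift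

variable {R A : Type*} [CommRing R] [Ring A] [Algebra R A]

/-- Multiplying an eigenvector of `D` of eigenvalue `s² - 1` by `x` gives a sum of eigenvectors of
eigenvalues `(s ± 1)² - 1`. This is encoded without reference to a module or to `s`: with `L` and
`P` the left and right multiplications by `D`, it says that `(L - P)² x = 2 (L + P) x + 3 x`. -/
def IsShiftedByCasimir (D x : A) : Prop :=
  D * D * x - 2 * (D * x * D) + x * D * D = 2 * (D * x + x * D) + 3 * x

variable [Invertible (2 : R)]

variable (R) in
/-- The operator `S` on `A` for which `IsShiftedByCasimir D x` gives `D x = ((S + 1)² - 1) x` and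
`x D = (S² - 1) x`. -/
def shift (D : A) : Module.End R A :=
  (⅟2 : R) • (LinearMap.mulLeft R D - LinearMap.mulRight R D - 1)

lemma two_smul_shift_apply (D a : A) : (2 : R) • shift R D a = D * a - a * D - a := by
  simp [shift]

lemma aeval_shift_two_mul_X_add_one_mul (D a : A) (p : R[X]) :
    aeval (shift R D) ((2 * X + 1) * p) a
      = D * aeval (shift R D) p a - aeval (shift R D) p a * D := by
  rw [map_mul, Module.End.mul_apply, ← C_ofNat, ← smul_eq_C_mul]
  simp [two_smul_shift_apply]

lemma commute_mulLeft_shift (D : A) : Commute (LinearMap.mulLeft R D) (shift R D) :=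
  (((Commute.refl _).sub_right (LinearMap.commute_mulLeft_right D D)).sub_right
    (Commute.one_right _)).smul_right _

lemma commute_mulRight_shift (D : A) : Commute (LinearMap.mulRight R D) (shift R D) :=
  (((LinearMap.commute_mulLeft_right D D).symm.sub_right (Commute.refl _)).sub_right
    (Commute.one_right _)).smul_right _

variable {D x : A}

lemma IsShiftedByCasimir.left_mul_eq_aeval_shift (hD : IsShiftedByCasimir D x) :
    D * x = aeval (shift R D) ((X + 1) ^ 2 - 1 : R[X]) x := by
  have expand : (2 ^ 2 : R) • ((X + 1) ^ 2 - 1 : R[X])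
      = (2 * X + 1) * ((2 * X + 1) * 1) + (2 : R) • ((2 * X + 1) * 1) - (3 : R) • 1 := by
    simp only [smul_eq_C_mul, C_pow, C_ofNat]
    ring
  refine ((isUnit_of_invertible (2 : R)).pow 2).smul_left_cancel.1 ?_
  rw [← LinearMap.smul_apply, ← map_smul, expand]
  simp only [map_sub, map_add, map_smul, map_one, LinearMap.sub_apply, LinearMap.add_apply,
    LinearMap.smul_apply, Module.End.one_apply, aeval_shift_two_mul_X_add_one_mul]
  rw [IsShiftedByCasimir] at hD
  simp only [pow_two, mul_smul, ofNat_smul_eq_nsmul]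
  linear_combination (norm := noncomm_ring) -hD

lemma IsShiftedByCasimir.right_mul_eq_aeval_shift (hD : IsShiftedByCasimir D x) :
    x * D = aeval (shift R D) (X ^ 2 - 1 : R[X]) x := by
  have split : (X ^ 2 - 1 : R[X]) = ((X + 1) ^ 2 - 1) - (2 * X + 1) * 1 := by ring
  rw [split, map_sub, LinearMap.sub_apply, ← hD.left_mul_eq_aeval_shift,
    aeval_shift_two_mul_X_add_one_mul, map_one, Module.End.one_apply, sub_sub_cancel]

lemma IsShiftedByCasimir.aeval_mul (hD : IsShiftedByCasimir D x) (w : R[X]) :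
    aeval D w * x = aeval (shift R D) (w.comp ((X + 1) ^ 2 - 1)) x := by
  rw [← aeval_apply_eq_aeval_comp_apply (commute_mulLeft_shift D) hD.left_mul_eq_aeval_shift w,
    aeval_mulLeft, LinearMap.mulLeft_apply]

lemma IsShiftedByCasimir.mul_aeval (hD : IsShiftedByCasimir D x) (w : R[X]) :
    x * aeval D w = aeval (shift R D) (w.comp (X ^ 2 - 1)) x := by
  rw [← aeval_apply_eq_aeval_comp_apply (commute_mulRight_shift D) hD.right_mul_eq_aeval_shift w,
    aeval_mulRight, LinearMap.mulRight_apply]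

lemma IsShiftedByCasimir.four_mul_aeval_bracket (hD : IsShiftedByCasimir D x) {w z : R[X]}
    (hz : IsCentralCompanion w z) :
    4 * (aeval D z * x - x * aeval D z)
      = aeval D w * (D * x - x * D) + (D * x - x * D) * aeval D w
        - (aeval D w * x - x * aeval D w) := by
  have hw : Commute D (aeval D w) := commute_aeval_right (Commute.refl D) w
  have bracket_left : aeval D w * (D * x - x * D) = D * (aeval D w * x) - aeval D w * x * D := by
    rw [mul_sub, ← mul_assoc, ← mul_assoc, ← hw.eq, mul_assoc D]
  have bracket_right : (D * x - x * D) * aeval D w = D * (x * aeval D w) - x * aeval D w * D := by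
    rw [sub_mul, mul_assoc x, hw.eq, mul_assoc, ← mul_assoc x]
  have hz' : 4 • (z.comp ((X + 1) ^ 2 - 1) - z.comp (X ^ 2 - 1))
      = (2 * X + 1) * w.comp ((X + 1) ^ 2 - 1) + (2 * X + 1) * w.comp (X ^ 2 - 1)
        - (w.comp ((X + 1) ^ 2 - 1) - w.comp (X ^ 2 - 1)) := by
    rw [IsCentralCompanion] at hz
    linear_combination 2 * hz
  have apply_hz' := congr_arg (aeval (shift R D) · x) hz'
  simp only [map_sub, map_add, map_nsmul, LinearMap.sub_apply, LinearMap.add_apply,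
    LinearMap.smul_apply, aeval_shift_two_mul_X_add_one_mul, ← hD.aeval_mul,
    ← hD.mul_aeval] at apply_hz'
  rw [bracket_left, bracket_right, ← apply_hz', nsmul_eq_mul, Nat.cast_ofNat]

end Shift

section Relations

variable {A : Type*} [Ring A] {e f h x y : A}

/-- The relations of `U(sl₂) ⋉ T(V)`, where `V` is the standard representation with basis `x, y`.
The relation between `x` and `y` is left out. -/
structure StandardRelations (e f h x y : A) : Prop where
  h_e : h * e - e * h = 2 * e
  h_f : h * f - f * h = -2 * f
  e_f : e * f - f * e = h
  e_x : e * x - x * e = 0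
  f_x : f * x - x * f = y
  h_x : h * x - x * h = x
  h_y : h * y - y * h = -y
  e_y : e * y - y * e = x
  f_y : f * y - y * f = 0

/-- The Casimir element `Δ` of `sl₂`, normalized to act by `s² - 1` on the simple module of
dimension `s`. -/
def casimir (e f h : A) : A := h ^ 2 + 4 * f * e + 2 * h

/-- Twice the part `t` of `t_z` of degree two in `x, y`; doubling avoids the coefficient `1 / 2`. -/
def twiceQuadratic (e f h x y : A) : A :=
  2 * e * y ^ 2 + h * (x * y + y * x) - 2 * f * x ^ 2

namespace StandardRelations

lemma commute_casimir_e (H : StandardRelations e f h x y) : Commute (casimir e f h) e := by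
  rw [commute_iff_eq, casimir]
  linear_combination (norm := noncomm_ring) h * H.h_e + H.h_e * h - 4 * H.e_f * e

lemma commute_casimir_f (H : StandardRelations e f h x y) : Commute (casimir e f h) f := by
  rw [commute_iff_eq, casimir]
  linear_combination (norm := noncomm_ring) h * H.h_f + H.h_f * h + 4 * f * H.e_f

lemma commute_casimir_h (H : StandardRelations e f h x y) : Commute (casimir e f h) h := by
  rw [commute_iff_eq, casimir]
  linear_combination (norm := noncomm_ring) - 4 * f * H.h_e - 4 * H.h_f * e

lemma casimir_bracket_x (H : StandardRelations e f h x y) :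
    casimir e f h * x - x * casimir e f h = 2 * h * x + 4 * e * y - 3 * x := by
  rw [casimir]
  linear_combination (norm := noncomm_ring) h * H.h_x + H.h_x * h + 4 * f * H.e_x
    + 4 * H.f_x * e + H.h_x - 4 * H.e_y

lemma casimir_bracket_y (H : StandardRelations e f h x y) :
    casimir e f h * y - y * casimir e f h = -2 * h * y + 4 * f * x - 3 * y := by
  rw [casimir]
  linear_combination (norm := noncomm_ring) h * H.h_y + H.h_y * h + 4 * f * H.e_y
    + 4 * H.f_y * e + 3 * H.h_y

lemma isShiftedByCasimir (H : StandardRelations e f h x y) :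
    IsShiftedByCasimir (casimir e f h) x := by
  obtain ⟨D, hD⟩ : ∃ D, D = casimir e f h := ⟨_, rfl⟩
  have hDe : D * e - e * D = 0 := by rw [hD, H.commute_casimir_e.eq, sub_self]
  have hDh : D * h - h * D = 0 := by rw [hD, H.commute_casimir_h.eq, sub_self]
  have hDx := H.casimir_bracket_x
  have hDy := H.casimir_bracket_y
  rw [← hD] at hDx hDy ⊢
  rw [IsShiftedByCasimir]
  rw [casimir] at hD
  linear_combination (norm := noncomm_ring) D * hDx - hDx * D + 2 * hDh * x + 4 * hDe * y
    + 2 * h * hDx + 4 * e * hDy - hDx + 8 * H.h_e * y + 16 * H.e_f * x - 4 * hD * x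

lemma commute_twiceQuadratic_e (H : StandardRelations e f h x y) :
    Commute (twiceQuadratic e f h x y) e := by
  rw [commute_iff_eq, twiceQuadratic]
  linear_combination (norm := noncomm_ring) -2 * e * (H.e_y * y) - 2 * e * (y * H.e_y)
    + H.h_e * (x * y + y * x) - h * (H.e_x * y) - h * (x * H.e_y) - h * (H.e_y * x)
    - h * (y * H.e_x) + 2 * H.e_f * x ^ 2 + 2 * f * (H.e_x * x) + 2 * f * (x * H.e_x)

lemma commute_twiceQuadratic_f (H : StandardRelations e f h x y) :
    Commute (twiceQuadratic e f h x y) f := by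
  rw [commute_iff_eq, twiceQuadratic]
  linear_combination (norm := noncomm_ring) 2 * H.e_f * y ^ 2 - 2 * e * (H.f_y * y)
    - 2 * e * (y * H.f_y) + H.h_f * (x * y + y * x) - h * (H.f_x * y) - h * (x * H.f_y)
    - h * (H.f_y * x) - h * (y * H.f_x) + 2 * f * (H.f_x * x) + 2 * f * (x * H.f_x)

lemma commute_twiceQuadratic_h (H : StandardRelations e f h x y) :
    Commute (twiceQuadratic e f h x y) h := by
  rw [commute_iff_eq, twiceQuadratic]
  linear_combination (norm := noncomm_ring) -2 * H.h_e * y ^ 2 - 2 * e * (H.h_y * y)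
    - 2 * e * (y * H.h_y) - h * (H.h_x * y) - h * (x * H.h_y) - h * (H.h_y * x)
    - h * (y * H.h_x) + 2 * H.h_f * x ^ 2 + 2 * f * (H.h_x * x) + 2 * f * (x * H.h_x)

lemma two_mul_bracket_twiceQuadratic {w : A} (H : StandardRelations e f h x y)
    (hxy : x * y - y * x = w) (hwe : Commute w e) (hwh : Commute w h) :
    2 * (x * twiceQuadratic e f h x y - twiceQuadratic e f h x y * x)
      = w * (casimir e f h * x - x * casimir e f h) + (casimir e f h * x - x * casimir e f h) * w
        - (w * x - x * w) := by
  have bracket : x * twiceQuadratic e f h x y - twiceQuadratic e f h x y * x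
      = 2 * e * (w * y + y * w) + h * (x * w + w * x) - 2 * w * x - x * w := by
    rw [twiceQuadratic]
    linear_combination (norm := noncomm_ring) - 2 * H.e_x * y ^ 2 + 2 * e * (hxy * y)
      + 2 * e * (y * hxy) - H.h_x * (x * y + y * x) + h * (x * hxy) + h * (hxy * x)
      + 2 * H.f_x * x ^ 2 - 2 * hxy * x - x * hxy
  rw [bracket, H.casimir_bracket_x]
  linear_combination (norm := noncomm_ring) -2 * hwh.eq * x - 4 * hwe.eq * y

end StandardRelations

variable {R : Type*} [CommRing R] [Invertible (2 : R)] [Algebra R A]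

/-- The element `t_z` of the infinitesimal Hecke algebra, with the Casimir element as `Δ`. -/
noncomputable def centralElement (e f h x y : A) (z : R[X]) : A :=
  e * y ^ 2 + (⅟2 : R) • (h * (x * y + y * x)) - f * x ^ 2 + aeval (casimir e f h) z

lemma centralElement_eq (e f h x y : A) (z : R[X]) :
    centralElement e f h x y z
      = (⅟2 : R) • twiceQuadratic e f h x y + aeval (casimir e f h) z := by
  have half (a b : A) : (⅟2 : R) • (2 * a * b) = a * b := by
    rw [mul_assoc, two_mul, ← two_smul R, invOf_smul_smul]
  rw [centralElement, twiceQuadratic, smul_sub, smul_add, half, half]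

namespace StandardRelations

variable {w z : R[X]}

lemma commute_centralElement_x (H : StandardRelations e f h x y)
    (hxy : x * y - y * x = aeval (casimir e f h) w) (hz : IsCentralCompanion w z) :
    Commute (centralElement e f h x y z) x := by
  have hwe : Commute (aeval (casimir e f h) w) e :=
    (commute_aeval_right H.commute_casimir_e.symm w).symm
  have hwh : Commute (aeval (casimir e f h) w) h :=
    (commute_aeval_right H.commute_casimir_h.symm w).symm
  have brackets_cancel := (H.two_mul_bracket_twiceQuadratic hxy hwe hwh).trans
    (H.isShiftedByCasimir.four_mul_aeval_bracket hz).symm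
  have four_smul_half (a : A) : (2 ^ 2 : R) • (⅟2 : R) • a = 2 * a := by
    rw [smul_smul, pow_two, mul_invOf_cancel_right, two_smul, two_mul]
  have four_smul (a : A) : (2 ^ 2 : R) • a = 4 * a := by
    rw [pow_two, mul_smul, two_smul, two_smul]
    noncomm_ring
  refine ((isUnit_of_invertible (2 : R)).pow 2).smul_left_cancel.1 ?_
  rw [centralElement_eq, add_mul, mul_add, smul_mul_assoc, mul_smul_comm, smul_add, smul_add,
    four_smul_half, four_smul_half, four_smul, four_smul]
  linear_combination (norm := noncomm_ring) -brackets_cancel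

lemma commute_centralElement {g : A} (H : StandardRelations e f h x y)
    (hxy : x * y - y * x = aeval (casimir e f h) w) (hz : IsCentralCompanion w z)
    (hg : g ∈ ({e, f, h, x, y} : Set A)) : Commute (centralElement e f h x y z) g := by
  have commute_of {a : A} (hT : Commute (twiceQuadratic e f h x y) a)
      (hD : Commute (casimir e f h) a) : Commute (centralElement e f h x y z) a := by
    rw [centralElement_eq]
    exact (hT.smul_left _).add_left (commute_aeval_right hD.symm z).symm
  have hf := commute_of H.commute_twiceQuadratic_f H.commute_casimir_f
  have hx := H.commute_centralElement_x hxy hz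
  rcases hg with rfl | rfl | rfl | rfl | rfl
  · exact commute_of H.commute_twiceQuadratic_e H.commute_casimir_e
  · exact hf
  · exact commute_of H.commute_twiceQuadratic_h H.commute_casimir_h
  · exact hx
  · have hy := (hf.mul_right hx).sub_right (hx.mul_right hf)
    rwa [H.f_x] at hy

end StandardRelations

end Relations

end InfinitesimalHecke

open InfinitesimalHecke in
theorem hecke_center_general {R : Type*} [CommRing R] [Algebra ℚ R] (z' : R[X]) :
    ∃ z : R[X], ∀ {A : Type*} [Ring A] [Algebra R A] {e f h x y : A},
      StandardRelations e f h x y → x * y - y * x = aeval (casimir e f h) z' →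
      ∀ g ∈ ({e, f, h, x, y} : Set A),
        Commute (e * y ^ 2 + algebraMap ℚ R 2⁻¹ • (h * (x * y + y * x)) - f * x ^ 2
          + aeval (casimir e f h) z) g := by
  obtain ⟨z, hz⟩ := exists_isCentralCompanion z'
  have half := two_mul_algebraMap_two_inv R
  let : Invertible (2 : R) := ⟨algebraMap ℚ R 2⁻¹, by rwa [mul_comm], half⟩
  exact ⟨z, fun H hxy _ hg ↦ H.commute_centralElement hxy hz hg⟩

/-- In the infinitesimal Hecke algebra `H_{z'}` of `sl₂` (formalized via its defining
relations inside an arbitrary associative `ℂ`-algebra: the `sl₂` relations, the standard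
action relations on `x, y`, and `[x,y] = z'(Δ)` with `Δ = h² + 4fe + 2h`), the element
`t_z = ey² + ½h(xy+yx) - fx² + z(Δ)` is central (commutes with `e, f, h, x, y`) for the
appropriate `z ∈ ℂ[Δ]` determined by `z'`. -/
theorem hecke_center {A : Type*} [Ring A] [Algebra ℂ A] (e f h x y : A) (z' : Polynomial ℂ)
    (hhe : h * e - e * h = 2 * e) (hhf : h * f - f * h = -2 * f) (hef : e * f - f * e = h)
    (hex : e * x - x * e = 0) (hfx : f * x - x * f = y) (hhx : h * x - x * h = x)
    (hhy : h * y - y * h = -y) (hey : e * y - y * e = x) (hfy : f * y - y * f = 0)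
    (hxy : x * y - y * x = aeval (h ^ 2 + 4 * f * e + 2 * h) z') :
    ∃ z : Polynomial ℂ,
      ∀ g ∈ ({e, f, h, x, y} : Set A),
        Commute (e * y ^ 2 + (1 / 2 : ℂ) • (h * (x * y + y * x)) - f * x ^ 2
          + aeval (h ^ 2 + 4 * f * e + 2 * h) z) g := by
  obtain ⟨z, hz⟩ := hecke_center_general z'
  refine ⟨z, ?_⟩
  simpa [InfinitesimalHecke.casimir] using
    hz ⟨hhe, hhf, hef, hex, hfx, hhx, hhy, hey, hfy⟩ hxy
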